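/- arXiv:math/0410030 — 3 statements merged into one kernel-verified Lean document; each statement's English description precedes it below -/
import Mathlib

section
/- Let g and Q be positive integers with g < Q, let n ≥ 3, r = ⌈n/2⌉, and P = 2^r + 2^{n-r+1} - 3. Then every g-colored distribution of Q·P pebbles on the cycle C_n is Q-coverable: there is a sequence of color-respecting pebbling steps after which every vertex carries at least Q pebbles. -/
/-!
Only the number `∑ c, D v c` of pebbles on each vertex matters: since `g < Q`, a vertex carrying at
least `Q + 2` pebbles has two of the same color (pigeonhole), so two pebbles can leave it and one
arrive at a neighbor, while at least `Q` stay behind. Put `b v = (∑ c, D v c) - Q`; the goal is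
to make every `b v` nonnegative by moves `b u -= 2, b v += 1` that keep `b u` nonnegative.

On a path this is decided greedily. Working from the far end, a vertex with balance `s` passes
`⌊s / 2⌋` pebbles to the next one if `0 ≤ s`, and asks it for `2 * |s|` pebbles if `s < 0`
(`flow`, `out`); if the last balance is nonnegative, the path can be covered
(`exists_reach_of_out`). The success of this test does not depend on the vertex towards which the
pebbles are sent (`nonneg_out_split`), so in particular it is invariant under reversal. The number
of pebbles on an arc of given length is bounded in terms of its final balance (`out_bound`).

On the cycle, let `r = ⌈n / 2⌉` and `P = 2 ^ r + 2 ^ (n - r + 1) - 3`, and suppose no path of `n`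
consecutive vertices passes the test. At a vertex with arms of lengths `r - 1` and `n - r`, exactly
one arm can be covered by itself: if both or neither could, the bounds on the two arms would give
fewer than `Q * P` pebbles (`sum_lt_of_failing`). Let `f i` say that the arc of length `n - r`
starting at `i` can be covered. Going around the cycle, these alternatives force `f (i + 1) ↔ f i`.
For odd `n` they also force `f (i + r) ↔ ¬ f i`, a contradiction. For even `n`, either every arc of
length `r` can be covered, and two complementary ones cover the cycle; or none can, and the bounds
on two complementary arcs again leave fewer than `Q * P` pebbles (`exists_arc_nonneg`).
-/

open SimpleGraph Finset

/-- A pebbling step: remove two pebbles from `u` and place one on an adjacent vertex `v`. -/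
def PebblingStep {V : Type*} [DecidableEq V] (G : SimpleGraph V) (D D' : V → ℕ) : Prop :=
  ∃ u v, G.Adj u v ∧ 2 ≤ D u ∧
    D' = fun w => if w = u then D u - 2 else if w = v then D v + 1 else D w

/-- A distribution is coverable if pebbling steps can put a pebble on every vertex. -/
def Coverable {V : Type*} [DecidableEq V] (G : SimpleGraph V) (D : V → ℕ) : Prop :=
  ∃ D', Relation.ReflTransGen (PebblingStep G) D D' ∧ ∀ v, 1 ≤ D' v

/-- The cover pebbling number: the least `N` such that every distribution of `N` pebbles
is coverable. -/
noncomputable def coverPebblingNumber {V : Type*} [DecidableEq V] [Fintype V]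
    (G : SimpleGraph V) : ℕ :=
  sInf {N | ∀ D : V → ℕ, ∑ v, D v = N → Coverable G D}

/-- A color-respecting pebbling step on a colored distribution. -/
def ColorStep {V C : Type*} [DecidableEq V] [DecidableEq C] (G : SimpleGraph V)
    (D D' : V → C → ℕ) : Prop :=
  ∃ u v c, G.Adj u v ∧ 2 ≤ D u c ∧
    D' = fun w d => if w = u ∧ d = c then D u c - 2
      else if w = v ∧ d = c then D v c + 1 else D w d

/-- A colored distribution is `Q`-coverable if color-respecting steps can put at least `Q`
pebbles on every vertex. -/
def QCoverable {V C : Type*} [DecidableEq V] [DecidableEq C] [Fintype C] (G : SimpleGraph V)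
    (Q : ℕ) (D : V → C → ℕ) : Prop :=
  ∃ D', Relation.ReflTransGen (ColorStep G) D D' ∧ ∀ v, Q ≤ ∑ c, D' v c

/-- A graph is good if its cover pebbling number is realized by a simple distribution. -/
def IsGood {V : Type*} [DecidableEq V] [Fintype V] (G : SimpleGraph V) : Prop :=
  ∃ u : V, coverPebblingNumber G = ∑ w : V, 2 ^ G.dist u w

/-! ### Flow along a path -/

/-- What a vertex with balance `s` contributes to its neighbor: half of a surplus, or the (negative)
price of a deficit. -/
def flow (s : ℤ) : ℤ := if 0 ≤ s then s / 2 else 2 * s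

/-- What a path with balances `l` contributes to a vertex attached in front of its head, when all
pebbles are sent towards that vertex. -/
def out : List ℤ → ℤ
  | [] => 0
  | y :: l => flow (out l + y)

lemma flow_of_nonneg {s : ℤ} (h : 0 ≤ s) : flow s = s / 2 := if_pos h

lemma flow_of_neg {s : ℤ} (h : s < 0) : flow s = 2 * s := if_neg (by omega)

lemma flow_nonneg_iff (s : ℤ) : 0 ≤ flow s ↔ 0 ≤ s := by
  unfold flow; split_ifs <;> omega

/-- An edge may be crossed in either direction without changing whether the balance suffices. -/
lemma flow_add_nonneg_iff (s t : ℤ) : 0 ≤ flow s + t ↔ 0 ≤ s + flow t := by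
  unfold flow; split_ifs <;> omega

/-- The test for a path can be made at any of its vertices. -/
lemma nonneg_out_split (l₁ l₂ : List ℤ) (y : ℤ) :
    0 ≤ out l₁ + y + out l₂ ↔ 0 ≤ out (l₁.reverse ++ y :: l₂) := by
  induction l₁ generalizing y l₂ with
  | nil =>
    simp only [out, List.reverse_nil, List.nil_append, flow_nonneg_iff]
    rw [zero_add, add_comm]
  | cons z l ih =>
    rw [List.reverse_cons, List.append_assoc, List.singleton_append, ← ih (y :: l₂) z]
    simp only [out]
    rw [add_assoc, flow_add_nonneg_iff, add_comm y]

lemma nonneg_out_reverse (l : List ℤ) : 0 ≤ out l.reverse ↔ 0 ≤ out l := by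
  cases l with
  | nil => simp
  | cons z l =>
    rw [List.reverse_cons, ← nonneg_out_split]
    simp [out, flow_nonneg_iff]

lemma nonneg_out_append {l₁ l₂ : List ℤ} (h₁ : 0 ≤ out l₁) (h₂ : 0 ≤ out l₂) :
    0 ≤ out (l₁ ++ l₂) := by
  cases l₂ with
  | nil => simpa using h₁
  | cons y l =>
    have h := nonneg_out_split l₁.reverse l y
    rw [List.reverse_reverse] at h
    rw [← h]
    rw [← nonneg_out_reverse] at h₁
    rw [out, flow_nonneg_iff] at h₂
    omega

lemma sum_add_nonneg {Q : ℤ} {l : List ℤ} (hl : ∀ y ∈ l, -Q ≤ y) :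
    0 ≤ l.sum + Q * l.length := by
  induction l with
  | nil => simp
  | cons y l ih =>
    have h₁ := ih fun z hz => hl z (List.mem_cons_of_mem _ hz)
    have h₂ := hl y List.mem_cons_self
    simp only [List.sum_cons, List.length_cons]
    push_cast
    linarith

/-- Bound on the number `l.sum + Q * l.length` of pebbles on a path in terms of what it sends out;
in the first case it is attained by putting all pebbles on the far end. -/
lemma out_bound {Q : ℤ} {l : List ℤ} (hl : ∀ y ∈ l, -Q ≤ y) :
    (0 ≤ out l → l.sum + Q * l.length ≤
      Q * (2 ^ l.length - 1) + 2 ^ l.length * (out l + 1) - 1) ∧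
    (out l < 0 → 2 * (l.sum + Q * l.length) ≤ 2 * (Q * (2 ^ l.length - 1)) + out l) := by
  induction l with
  | nil => simp [out]
  | cons y l ih =>
    have hl' : ∀ z ∈ l, -Q ≤ z := fun z hz => hl z (List.mem_cons_of_mem _ hz)
    obtain ⟨ih₁, ih₂⟩ := ih hl'
    have h₀ := sum_add_nonneg hl'
    have hy := hl y List.mem_cons_self
    have hp : (1 : ℤ) ≤ 2 ^ l.length := one_le_pow₀ (by norm_num)
    simp only [List.sum_cons, List.length_cons, out, pow_succ]
    push_cast
    generalize (2 : ℤ) ^ l.length = p at *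
    generalize out l = o at *
    generalize (l.length : ℤ) = k at *
    generalize l.sum = S at *
    rcases le_or_gt 0 (o + y) with hs | hs
    · rw [flow_of_nonneg hs]
      refine ⟨fun _ => ?_, fun h => by omega⟩
      have h₁ : o + y + 1 ≤ 2 * ((o + y) / 2 + 1) := by omega
      have h₂ := mul_le_mul_of_nonneg_left h₁ (by linarith : 0 ≤ p)
      rcases le_or_gt 0 o with ho | ho
      · have := ih₁ ho
        nlinarith [mul_nonneg (sub_nonneg.2 hp) (by linarith : 0 ≤ Q + y)]
      · have := ih₂ ho
        nlinarith [mul_nonneg (sub_nonneg.2 hp) (by linarith : 0 ≤ o + y + 1)]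
    · rw [flow_of_neg hs]
      refine ⟨fun h => by omega, fun _ => ?_⟩
      rcases le_or_gt 0 o with ho | ho
      · have := ih₁ ho
        nlinarith [mul_nonneg (sub_nonneg.2 hp) (by linarith : 0 ≤ Q - (o + 1))]
      · have := ih₂ ho
        nlinarith

/-! ### Realizing the flow by color-respecting steps -/

/-- Surplus of `v` over the target `Q`. -/
def bal {V : Type*} {g : ℕ} (Q : ℕ) (D : V → Fin g → ℕ) (v : V) : ℤ := (∑ c, D v c : ℕ) - Q

section Steps

variable {V : Type*} [DecidableEq V] {g Q : ℕ} {G : SimpleGraph V}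

/-- By pigeonhole, a vertex with two pebbles to spare has two spare pebbles of one color. -/
lemma exists_step (hgQ : g < Q) {u v : V} (h : G.Adj u v) (D : V → Fin g → ℕ)
    (hu : 2 ≤ bal Q D u) :
    ∃ D', ColorStep G D D' ∧ bal Q D' u = bal Q D u - 2 ∧ bal Q D' v = bal Q D v + 1 ∧
      ∀ w, w ≠ u → w ≠ v → bal Q D' w = bal Q D w := by
  obtain ⟨c, hc⟩ : ∃ c, 2 ≤ D u c := by
    by_contra! hlt
    have : ∑ c, D u c ≤ ∑ _c : Fin g, 1 := Finset.sum_le_sum fun c _ => by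
      have := hlt c; omega
    simp only [Finset.sum_const, Finset.card_univ, Fintype.card_fin, smul_eq_mul, mul_one] at this
    unfold bal at hu
    omega
  have hne : v ≠ u := h.ne'
  refine ⟨_, ⟨u, v, c, h, hc, rfl⟩, ?_, ?_, ?_⟩
  · unfold bal
    have h₁ := Finset.add_sum_erase univ (fun d => D u d) (mem_univ c)
    rw [← Finset.add_sum_erase univ _ (mem_univ c), ← h₁,
      Finset.sum_congr rfl (g := fun d => D u d)]
    · simp only [true_and, if_true]
      push_cast [Nat.cast_sub hc]
      ring
    · intro d hd
      simp [Finset.ne_of_mem_erase hd]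
  · unfold bal
    have h₁ := Finset.add_sum_erase univ (fun d => D v d) (mem_univ c)
    rw [← Finset.add_sum_erase univ _ (mem_univ c), ← h₁,
      Finset.sum_congr rfl (g := fun d => D v d)]
    · simp only [hne, false_and, true_and, if_true, if_false]
      push_cast
      ring
    · intro d hd
      simp [Finset.ne_of_mem_erase hd]
  · intro w hwu hwv
    simp [bal, hwu, hwv]

lemma exists_moves (hgQ : g < Q) {u v : V} (h : G.Adj u v) (k : ℕ) (D : V → Fin g → ℕ)
    (hu : 2 * (k : ℤ) ≤ bal Q D u) :
    ∃ D', Relation.ReflTransGen (ColorStep G) D D' ∧ bal Q D' u = bal Q D u - 2 * k ∧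
      bal Q D' v = bal Q D v + k ∧ ∀ w, w ≠ u → w ≠ v → bal Q D' w = bal Q D w := by
  induction k with
  | zero => exact ⟨D, .refl, by simp⟩
  | succ k ih =>
    push_cast at hu
    obtain ⟨D₁, hr, h₁, h₂, h₃⟩ := ih (by omega)
    obtain ⟨D₂, hs, h₄, h₅, h₆⟩ := exists_step hgQ h D₁ (by omega)
    refine ⟨D₂, hr.tail hs, by push_cast; omega, by push_cast; omega, fun w hu hv => ?_⟩
    rw [h₆ w hu hv, h₃ w hu hv]

/-- The flow computed by `out` can be realized on a path `l` attached to `v`, provided `v` can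
afford what the path asks for. -/
lemma exists_reach_of_out (hgQ : g < Q) (l : List V) (v : V) (D : V → Fin g → ℕ)
    (hc : (v :: l).IsChain G.Adj) (hnd : (v :: l).Nodup)
    (ho : 0 ≤ out (l.map (bal Q D)) ∨ 0 ≤ bal Q D v + out (l.map (bal Q D))) :
    ∃ D', Relation.ReflTransGen (ColorStep G) D D' ∧
      bal Q D' v = bal Q D v + out (l.map (bal Q D)) ∧ (∀ w ∈ l, 0 ≤ bal Q D' w) ∧
      ∀ w, w ∉ v :: l → bal Q D' w = bal Q D w := by
  induction l generalizing v D with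
  | nil => exact ⟨D, .refl, by simp [out]⟩
  | cons u l ih =>
    rw [List.isChain_cons_cons] at hc
    obtain ⟨hvu, hc⟩ := hc
    rw [List.nodup_cons] at hnd
    obtain ⟨hv, hnd⟩ := hnd
    have hvl : v ∉ l := fun h => hv (List.mem_cons_of_mem _ h)
    have hul : u ∉ l := (List.nodup_cons.1 hnd).1
    simp only [List.map_cons, out] at ho ⊢
    rcases le_or_gt 0 (out (l.map (bal Q D)) + bal Q D u) with hs | hs
    -- The path behind `u` is settled first, then `u` passes on half of its surplus.
    · rw [flow_of_nonneg hs] at ho ⊢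
      obtain ⟨D₁, hr₁, h₁, h₂, h₃⟩ := ih u D hc hnd (Or.inr (by omega))
      obtain ⟨k, hk⟩ := Int.eq_ofNat_of_zero_le (Int.ediv_nonneg hs (by norm_num : (0 : ℤ) ≤ 2))
      obtain ⟨D₂, hr₂, h₄, h₅, h₆⟩ := exists_moves hgQ hvu.symm k D₁ (by omega)
      refine ⟨D₂, hr₁.trans hr₂, ?_, ?_, ?_⟩
      · rw [h₅, h₃ v hv, hk]
      · intro w hw
        rcases List.mem_cons.1 hw with rfl | hw
        · omega
        · rw [h₆ w (fun h => hul (h ▸ hw)) (fun h => hvl (h ▸ hw))]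
          exact h₂ w hw
      · intro w hw
        simp only [List.mem_cons, not_or] at hw
        rw [h₆ w hw.2.1 hw.1, h₃ w (by simp [hw.2])]
    -- First `v` pays the deficit of `u`, then `u` settles the path behind it.
    · rw [flow_of_neg hs] at ho ⊢
      obtain ⟨k, hk⟩ := Int.eq_ofNat_of_zero_le (by omega :
        0 ≤ -(out (l.map (bal Q D)) + bal Q D u))
      obtain ⟨D₁, hr₁, h₁, h₂, h₃⟩ := exists_moves hgQ hvu k D (by omega)
      have hmap : l.map (bal Q D₁) = l.map (bal Q D) := List.map_congr_left fun w hw =>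
        h₃ w (fun h => hvl (h ▸ hw)) (fun h => hul (h ▸ hw))
      obtain ⟨D₂, hr₂, h₄, h₅, h₆⟩ := ih u D₁ hc hnd (Or.inr (by rw [hmap]; omega))
      rw [hmap] at h₄
      refine ⟨D₂, hr₁.trans hr₂, ?_, ?_, ?_⟩
      · rw [h₆ v hv]; omega
      · intro w hw
        rcases List.mem_cons.1 hw with rfl | hw
        · omega
        · exact h₅ w hw
      · intro w hw
        simp only [List.mem_cons, not_or] at hw
        rw [h₆ w (by simp [hw.2]), h₃ w hw.1 hw.2.1]

end Steps

/-! ### Arcs of a periodic sequence -/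

/-- The arc of length `k` starting at position `i`. -/
def arc {α : Type*} (b : ℕ → α) (i k : ℕ) : List α := (List.range k).map fun j => b (i + j)

section Arcs

variable {α : Type*} {b : ℕ → α}

@[simp] lemma length_arc (i k : ℕ) : (arc b i k).length = k := by simp [arc]

lemma arc_succ (i k : ℕ) : arc b i (k + 1) = b i :: arc b (i + 1) k := by
  simp only [arc, List.range_succ_eq_map, List.map_cons, List.map_map, add_zero]
  congr 1
  exact List.map_congr_left fun j _ => congrArg b (by simp; omega)

lemma arc_add (i p q : ℕ) : arc b i (p + q) = arc b i p ++ arc b (i + p) q := by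
  simp [arc, List.range_add, Function.comp_def, add_assoc]

lemma arc_add_period {n : ℕ} (hb : ∀ i, b (i + n) = b i) (i k : ℕ) :
    arc b (i + n) k = arc b i k :=
  List.map_congr_left fun j _ => by rw [← hb (i + j)]; congr 1; omega

lemma mem_arc {y : α} {i k : ℕ} (h : y ∈ arc b i k) : ∃ j, y = b j := by
  obtain ⟨j, -, rfl⟩ := List.mem_map.1 h
  exact ⟨_, rfl⟩

end Arcs

/-- If the test fails at a vertex with balance `y` whose arms `l₁` and `l₂` are both coverable by
themselves or both not, then there are fewer pebbles than stacking at that vertex requires. -/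
lemma sum_lt_of_failing {Q : ℤ} (hQ : 1 ≤ Q) {l₁ l₂ : List ℤ} {y : ℤ}
    (h₁ : ∀ z ∈ l₁, -Q ≤ z) (h₂ : ∀ z ∈ l₂, -Q ≤ z) (hy : -Q ≤ y)
    (hp : l₁ ≠ []) (hq : l₂ ≠ []) (hfail : out (l₁ ++ y :: l₂) < 0)
    (hiff : 0 ≤ out l₁ ↔ 0 ≤ out l₂) :
    (l₁ ++ y :: l₂).sum + Q * (l₁ ++ y :: l₂).length <
      Q * (2 ^ (l₁.length + 1) + 2 ^ (l₂.length + 1) - 3) := by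
  have hsplit := nonneg_out_split l₁.reverse l₂ y
  rw [List.reverse_reverse] at hsplit
  have hlt : out l₁.reverse + y + out l₂ < 0 := by
    by_contra hge
    have := hsplit.1 (not_lt.1 hge)
    omega
  rw [← nonneg_out_reverse] at hiff
  have hb₁ := out_bound (Q := Q) (l := l₁.reverse) (by simpa using h₁)
  have hb₂ := out_bound h₂
  have hn₁ := sum_add_nonneg h₁
  have hn₂ := sum_add_nonneg h₂
  have hA : (2 : ℤ) ≤ 2 ^ l₁.length :=
    le_self_pow₀ (by norm_num) (by simpa using hp)
  have hB : (2 : ℤ) ≤ 2 ^ l₂.length :=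
    le_self_pow₀ (by norm_num) (by simpa using hq)
  simp only [List.length_reverse, List.sum_reverse] at hb₁
  simp only [List.sum_append, List.sum_cons, List.length_append, List.length_cons, pow_succ]
  push_cast
  generalize (2 : ℤ) ^ l₁.length = A at *
  generalize (2 : ℤ) ^ l₂.length = B at *
  generalize out l₁.reverse = o₁ at *
  generalize out l₂ = o₂ at *
  generalize (l₁.length : ℤ) = k₁ at *
  generalize (l₂.length : ℤ) = k₂ at *
  generalize l₁.sum = S₁ at *
  generalize l₂.sum = S₂ at *
  rcases le_or_gt 0 o₂ with ho | ho
  · have ho₁ := hiff.2 ho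
    have e₁ := hb₁.1 ho₁
    have e₂ := hb₂.1 ho
    -- The available amount `o₁ + o₂ + (y + Q) ≤ Q - 1` is weighed by at most `max A B`.
    have e₃ : A * o₁ + B * o₂ + (y + Q) + A + B - 2 < Q * (A + B - 1) := by
      rcases le_total A B with hAB | hAB
      · nlinarith [mul_nonneg (sub_nonneg.2 hAB) ho₁,
          mul_nonneg (by linarith : 0 ≤ B - 1) (by linarith : 0 ≤ y + Q),
          mul_nonneg (by linarith : 0 ≤ B) (by omega : 0 ≤ -1 - (o₁ + y + o₂)),
          mul_nonneg (by linarith : 0 ≤ A - 1) (sub_nonneg.2 hQ)]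
      · nlinarith [mul_nonneg (sub_nonneg.2 hAB) ho,
          mul_nonneg (by linarith : 0 ≤ A - 1) (by linarith : 0 ≤ y + Q),
          mul_nonneg (by linarith : 0 ≤ A) (by omega : 0 ≤ -1 - (o₁ + y + o₂)),
          mul_nonneg (by linarith : 0 ≤ B - 1) (sub_nonneg.2 hQ)]
    linarith
  · have ho₁ : o₁ < 0 := by
      by_contra h
      have := hiff.1 (not_lt.1 h)
      omega
    have e₁ := hb₁.2 ho₁
    have e₂ := hb₂.2 ho
    linarith

/-- With `Q * P` pebbles, the path obtained by cutting the cycle at some edge passes the test. -/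
lemma exists_arc_nonneg {Q : ℤ} (hQ : 1 ≤ Q) {n : ℕ} (hn : 3 ≤ n) {b : ℕ → ℤ}
    (hb : ∀ i, -Q ≤ b i) (hper : ∀ i, b (i + n) = b i)
    (hsum : ∀ i, (arc b i n).sum + Q * n =
      Q * (2 ^ ((n + 1) / 2) + 2 ^ (n - (n + 1) / 2 + 1) - 3)) :
    ∃ i, 0 ≤ out (arc b i n) := by
  by_contra! hfail
  have hmem : ∀ i k, ∀ z ∈ arc b i k, -Q ≤ z := by
    intro i k z hz
    obtain ⟨j, rfl⟩ := mem_arc hz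
    exact hb j
  -- Exactly one of two arms with the balanced pair of lengths is coverable by itself.
  have key : ∀ i p q, p + (q + 1) = n → p ≠ 0 → q ≠ 0 →
      (2 : ℤ) ^ (p + 1) + 2 ^ (q + 1) =
        2 ^ ((n + 1) / 2) + 2 ^ (n - (n + 1) / 2 + 1) →
      (0 ≤ out (arc b i p) ↔ ¬ 0 ≤ out (arc b (i + p + 1) q)) := by
    intro i p q hpq hp hq hpow
    have harc : arc b i n = arc b i p ++ b (i + p) :: arc b (i + p + 1) q := by
      rw [← hpq, arc_add, arc_succ]
    by_contra hcon
    have hlt := sum_lt_of_failing hQ (hmem i p) (hmem (i + p + 1) q) (hb (i + p))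
      (by simpa [← List.length_pos_iff] using Nat.pos_of_ne_zero hp)
      (by simpa [← List.length_pos_iff] using Nat.pos_of_ne_zero hq)
      (by rw [← harc]; exact hfail i) (by tauto)
    have h := hsum i
    rw [← harc, length_arc, length_arc, length_arc, hpow] at hlt
    linarith
  rcases Nat.even_or_odd' n with ⟨r, rfl | rfl⟩
  · have e₁ : (2 * r + 1) / 2 = r := by omega
    have e₂ : 2 * r - r = r := by omega
    rw [e₁, e₂] at hsum key
    obtain ⟨m, rfl⟩ : ∃ m, r = m + 1 := ⟨r - 1, by omega⟩
    have k₁ := fun i => key i m (m + 1) (by ring) (by omega) (by omega) (by ring)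
    have k₂ := fun i => key i (m + 1) m (by ring) (by omega) (by omega) (by ring)
    have step : ∀ i, 0 ≤ out (arc b (i + 1) (m + 1)) ↔ 0 ≤ out (arc b i (m + 1)) := by
      intro i
      have h₁ := k₁ (i + (m + 1) + 1)
      have h₂ := k₂ i
      rw [show i + (m + 1) + 1 + m + 1 = (i + 1) + 2 * (m + 1) by ring,
        arc_add_period hper] at h₁
      tauto
    have const : ∀ i, 0 ≤ out (arc b i (m + 1)) ↔ 0 ≤ out (arc b 0 (m + 1)) := by
      intro i
      induction i with
      | zero => rfl
      | succ i ih => rw [step, ih]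
    have harc : arc b 0 (2 * (m + 1)) = arc b 0 (m + 1) ++ arc b (m + 1) (m + 1) := by
      rw [two_mul, arc_add, zero_add]
    by_cases h0 : 0 ≤ out (arc b 0 (m + 1))
    · have := nonneg_out_append h0 ((const (m + 1)).2 h0)
      rw [← harc] at this
      exact absurd this (not_le.2 (hfail 0))
    · have h1 : ¬ 0 ≤ out (arc b (m + 1) (m + 1)) := by rwa [const]
      have b₁ := (out_bound (hmem 0 (m + 1))).2 (not_le.1 h0)
      have b₂ := (out_bound (hmem (m + 1) (m + 1))).2 (not_le.1 h1)
      have hs := hsum 0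
      rw [harc, List.sum_append, pow_succ 2 (m + 1)] at hs
      rw [length_arc] at b₁ b₂
      have hp : (1 : ℤ) ≤ 2 ^ (m + 1) := one_le_pow₀ (by norm_num)
      push_cast at hs b₁ b₂
      nlinarith [mul_nonneg (by linarith : 0 ≤ Q) (sub_nonneg.2 hp)]
  · have e₁ : (2 * r + 1 + 1) / 2 = r + 1 := by omega
    have e₂ : 2 * r + 1 - (r + 1) = r := by omega
    rw [e₁, e₂] at key
    have k := fun i => key i r r (by ring) (by omega) (by omega) rfl
    have step : ∀ i, 0 ≤ out (arc b (i + 1) r) ↔ 0 ≤ out (arc b i r) := by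
      intro i
      have h₁ := k i
      have h₂ := k (i + r + 1)
      rw [show i + r + 1 + r + 1 = (i + 1) + (2 * r + 1) by ring, arc_add_period hper] at h₂
      tauto
    have const : ∀ i, 0 ≤ out (arc b i r) ↔ 0 ≤ out (arc b 0 r) := by
      intro i
      induction i with
      | zero => rfl
      | succ i ih => rw [step, ih]
    have h₁ := k 0
    rw [const (0 + r + 1)] at h₁
    tauto

/-! ### The cycle -/

/-- The vertex of the cycle at position `i`, read modulo `n`. -/
def vtx {n : ℕ} (hn : 0 < n) (i : ℕ) : Fin n := ⟨i % n, Nat.mod_lt i hn⟩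

lemma adj_vtx {n : ℕ} (hn : 3 ≤ n) (i : ℕ) :
    (cycleGraph n).Adj (vtx (by omega) i) (vtx (by omega) (i + 1)) := by
  rw [cycleGraph_adj']
  right
  rw [Fin.val_sub]
  simp only [vtx]
  have h : i % n < n := Nat.mod_lt _ (by omega)
  rw [Nat.add_mod i 1 n, Nat.mod_eq_of_lt (by omega : 1 < n)]
  rcases Nat.lt_or_ge (i % n + 1) n with h' | h'
  · rw [Nat.mod_eq_of_lt h', show n - i % n + (i % n + 1) = 1 + n by omega, Nat.add_mod_right,
      Nat.mod_eq_of_lt (by omega)]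
  · rw [show i % n + 1 = n by omega, Nat.mod_self, show n - i % n + 0 = 1 by omega,
      Nat.mod_eq_of_lt (by omega)]

lemma isChain_arc_vtx {n : ℕ} (hn : 3 ≤ n) (i k : ℕ) :
    (arc (vtx (by omega : 0 < n)) i k).IsChain (cycleGraph n).Adj := by
  rw [List.isChain_iff_getElem]
  intro j hj
  simp only [arc, List.getElem_map, List.getElem_range]
  exact adj_vtx hn (i + j)

lemma nodup_arc_vtx {n : ℕ} (hn : 0 < n) (i : ℕ) : (arc (vtx hn) i n).Nodup := by
  refine List.Nodup.map_on ?_ List.nodup_range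
  intro x hx y hy hxy
  rw [List.mem_range] at hx hy
  have h : i + x ≡ i + y [MOD n] := congrArg Fin.val hxy
  exact Nat.ModEq.eq_of_lt_of_lt (Nat.ModEq.add_left_cancel' i h) hx hy

lemma toFinset_arc_vtx {n : ℕ} (hn : 0 < n) (i : ℕ) : (arc (vtx hn) i n).toFinset = univ := by
  rw [← Finset.card_eq_iff_eq_univ, List.toFinset_card_of_nodup (nodup_arc_vtx hn i), length_arc,
    Fintype.card_fin]

theorem cycle_Q_coverable (g Q n : ℕ) (hg : 0 < g) (hgQ : g < Q) (hn : 3 ≤ n)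
    (D : Fin n → Fin g → ℕ)
    (htot : ∑ i, ∑ c, D i c =
      Q * (2 ^ ((n + 1) / 2) + 2 ^ (n - (n + 1) / 2 + 1) - 3)) :
    QCoverable (cycleGraph n) Q D := by
  have hn0 : 0 < n := by omega
  have hmap : ∀ i k, (arc (vtx hn0) i k).map (bal Q D) = arc (fun j => bal Q D (vtx hn0 j)) i k :=
    fun i k => by simp [arc, Function.comp_def]
  have hpow : 3 ≤ 2 ^ ((n + 1) / 2) + 2 ^ (n - (n + 1) / 2 + 1) := by
    have h₁ : 2 ^ 1 ≤ 2 ^ ((n + 1) / 2) := Nat.pow_le_pow_right (by norm_num) (by omega)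
    have h₂ : 2 ^ 1 ≤ 2 ^ (n - (n + 1) / 2 + 1) := Nat.pow_le_pow_right (by norm_num) (by omega)
    omega
  obtain ⟨i, hi⟩ := exists_arc_nonneg (Q := (Q : ℤ)) (by omega) hn
    (b := fun j => bal Q D (vtx hn0 j)) (fun j => by unfold bal; omega)
    (fun j => by simp [vtx]) (fun i => by
      rw [← hmap, ← List.sum_toFinset _ (nodup_arc_vtx hn0 i), toFinset_arc_vtx]
      unfold bal
      rw [Finset.sum_sub_distrib, ← Nat.cast_sum, htot]
      push_cast [Nat.cast_sub hpow]
      simp [mul_comm])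
  obtain ⟨m, rfl⟩ : ∃ m, n = m + 1 := ⟨n - 1, by omega⟩
  rw [← hmap, arc_succ, List.map_cons, out, flow_nonneg_iff] at hi
  have hc := isChain_arc_vtx hn i (m + 1)
  have hnd := nodup_arc_vtx hn0 i
  have huniv := toFinset_arc_vtx hn0 i
  rw [arc_succ] at hc hnd huniv
  obtain ⟨D', hr, hv, hl, -⟩ := exists_reach_of_out hgQ _ _ D hc hnd (Or.inr (by linarith))
  refine ⟨D', hr, fun w => ?_⟩
  have hw : w ∈ (vtx hn0 i :: arc (vtx hn0) (i + 1) m).toFinset := huniv ▸ mem_univ w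
  rw [List.mem_toFinset, List.mem_cons] at hw
  have : 0 ≤ bal Q D' w := by
    rcases hw with rfl | hw
    · linarith
    · exact hl w hw
  unfold bal at this
  omega
end

section
/- For any graph G and any n ≥ 3, γ(G □ C_n) ≤ γ(G)·(2^r + 2^{n-r+1} - 3), where r = ⌈n/2⌉ and □ denotes the Cartesian product of graphs. -/
/-!
The cover pebbling number is governed by stacked distributions: if
`N ≥ ∑ x, 2 ^ dist g x` for every vertex `g`, then every distribution of `N` pebbles is coverable
(`coverable_of_stacks_le`). Conversely `coverPebblingNumber G ≥ ∑ x, 2 ^ dist g x` for every `g`,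
because the weight `∑ x, D x * 2 ^ dist g x` never increases (`stack_le_coverPebblingNumber`).
Distances add up in a Cartesian product, so the cost of a stack in `G □ C_n` is the product of the
costs in the two factors, and the second factor is at most `2 ^ r + 2 ^ (n - r + 1) - 3`.

The stacking theorem is proved as follows. Each vertex is either *paid*, holding one pebble that is
set aside, or in the set `T` of unpaid vertices; `P` counts the free pebbles. A number `b x`
records how many of the original pebbles have been spent on the paid vertex `x`, so that
`∑ P + ∑ b` always accounts for all `N` pebbles, and the invariant is `b x ≤ 2 ^ dist g x` for every
vertex `g` which still has free pebbles. While `T` is nonempty, this invariant leaves free pebbles.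
Take `s` with `P s > 0` and `t ∈ T` at minimal distance `d`: then all vertices on a geodesic from
`s` to `t` other than `t` are paid. If `P s ≥ 2 ^ d`, pay `t` from `s`. If `P s = e < 2 ^ d`, then
`2 ^ d - e` is a sum of distinct powers `2 ^ i` with `i < d`, and the `e` free pebbles of `s`,
together with the set-aside pebbles of the geodesic's vertices at those distances `i`, suffice to
move one pebble to `t` (`exists_gather`). Those vertices become unpaid and what had been spent on
them is charged to `t`; by the invariant for `s` this is at most `2 ^ d`, and `2 ^ d ≤ 2 ^ dist g t`
for all `g` with free pebbles by minimality. In both cases the number of free pebbles decreases.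
-/

open SimpleGraph Finset

theorem exists_adj_dist {V : Type*} {G : SimpleGraph V} (hG : G.Connected) {s t : V} {d : ℕ}
    (h : G.dist s t = d + 1) :
    ∃ v, G.Adj s v ∧ G.dist v t = d := by
  obtain ⟨p, hp⟩ := hG.exists_walk_length_eq_dist s t
  cases p with
  | nil => simp at h
  | cons hadj q =>
    refine ⟨_, hadj, ?_⟩
    have h1 := dist_le q
    have h3 := dist_eq_one_iff_adj.2 hadj
    simp only [Walk.length_cons] at hp
    rename_i v
    have h5 : G.dist s t ≤ G.dist s v + G.dist v t := hG.dist_triangle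
    omega

section Stacking

variable {V : Type*} [DecidableEq V] {G : SimpleGraph V}

theorem pebblingStep_add {u v : V} (h : G.Adj u v) (R : V → ℕ) :
    PebblingStep G (R + Pi.single u 2) (R + Pi.single v 1) := by
  refine ⟨u, v, h, by simp, ?_⟩
  have := h.ne
  funext w
  by_cases h1 : w = u
  · subst h1; simp [this]
  · by_cases h2 : w = v
    · subst h2; simp [h1]
    · simp [h1, h2]

theorem reach_adj {u v : V} (h : G.Adj u v) (k : ℕ) : ∀ R : V → ℕ,
    Relation.ReflTransGen (PebblingStep G) (R + Pi.single u (2 * k)) (R + Pi.single v k) := by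
  induction k with
  | zero => intro R; simpa using Relation.ReflTransGen.refl
  | succ k ih =>
    intro R
    have h1 := ih (R + Pi.single u 2)
    have h2 := pebblingStep_add h (R + Pi.single v k)
    have e1 : R + Pi.single u (2 * (k + 1)) = R + Pi.single u 2 + Pi.single u (2 * k) := by
      rw [mul_add, mul_one, Pi.single_add]; abel
    have e2 : R + Pi.single v (k + 1) = R + Pi.single v k + Pi.single v 1 := by
      rw [Pi.single_add]; abel
    have e3 : R + Pi.single u 2 + Pi.single v k = R + Pi.single v k + Pi.single u 2 := by abel
    rw [e1, e2]
    rw [e3] at h1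
    exact h1.tail h2

/-- With `1 ≤ e ≤ 2 ^ dist s t` pebbles at `s`, one pebble can be brought to `t` by taking along one
pebble from each vertex of a suitable set `I` of vertices closer to `s` than `t` is, where `I` is
cheap as seen from `s`. The pebbles move along a geodesic, half of them being lost at each edge;
`I` consists of the vertices where an odd number arrives, which one extra pebble makes even. -/
theorem exists_gather (hG : G.Connected) (t : V) (d : ℕ) : ∀ (s : V) (e : ℕ), G.dist s t = d →
    1 ≤ e → e ≤ 2 ^ d → ∃ I : Finset V, (∀ x ∈ I, G.dist s x < d ∧ G.dist x t ≤ d) ∧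
      e + ∑ x ∈ I, 2 ^ G.dist s x ≤ 2 ^ d ∧
      ∀ R : V → ℕ, Relation.ReflTransGen (PebblingStep G)
        (R + Pi.single s e + fun x => if x ∈ I then 1 else 0) (R + Pi.single t 1) := by
  induction d with
  | zero =>
    intro s e hd h1 h2
    obtain rfl : s = t := hG.dist_eq_zero_iff.1 hd
    obtain rfl : e = 1 := by simp at h2; omega
    refine ⟨∅, by simp, by simp, fun R => ?_⟩
    have : (R + Pi.single s 1 + fun x => if x ∈ (∅ : Finset V) then 1 else 0)
      = R + Pi.single s 1 := by funext x; simp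
    rw [this]
  | succ d ih =>
    intro s e hd h1 h2
    obtain ⟨v, hv, hvd⟩ := exists_adj_dist hG hd
    have hsv := dist_eq_one_iff_adj.2 hv
    rw [pow_succ] at h2
    have hpow : 0 < 2 ^ d := by positivity
    obtain ⟨I, hI, hsum, hreach⟩ := ih v ((e + 1) / 2) hvd (by omega) (by omega)
    have htri : ∀ x, G.dist s x ≤ G.dist v x + 1 := fun x => by
      have : G.dist s x ≤ G.dist s v + G.dist v x := hG.dist_triangle
      omega
    have hsum' : ∑ x ∈ I, 2 ^ G.dist s x ≤ 2 * ∑ x ∈ I, 2 ^ G.dist v x := by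
      rw [mul_sum]
      refine sum_le_sum fun x _ => ?_
      rw [← pow_succ']
      exact Nat.pow_le_pow_right (by norm_num) (htri x)
    have hmove : ∀ R : V → ℕ, Relation.ReflTransGen (PebblingStep G)
        (R + Pi.single s (2 * ((e + 1) / 2)) + fun x => if x ∈ I then 1 else 0)
        (R + Pi.single t 1) := by
      intro R
      refine Relation.ReflTransGen.trans ?_ (hreach R)
      have := reach_adj hv ((e + 1) / 2) (R + fun x => if x ∈ I then 1 else 0)
      rwa [add_right_comm R _ (Pi.single s _), add_right_comm R _ (Pi.single v _)] at this
    have hI' : ∀ x ∈ I, G.dist s x < d + 1 ∧ G.dist x t ≤ d + 1 := fun x hx => by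
      have := hI x hx; have := htri x; omega
    rcases Nat.even_or_odd' e with ⟨c, hc | hc⟩
    · refine ⟨I, hI', by rw [pow_succ]; omega, fun R => ?_⟩
      have := hmove R
      rwa [show 2 * ((e + 1) / 2) = e by omega] at this
    · have hsI : s ∉ I := fun hs => by have := (hI s hs).2; omega
      refine ⟨insert s I, ?_, ?_, fun R => ?_⟩
      · intro x hx
        rcases mem_insert.1 hx with rfl | hx
        · simp [hd]
        · exact hI' x hx
      · rw [sum_insert hsI, SimpleGraph.dist_self, pow_zero, pow_succ]; omega
      · have := hmove R
        rw [show 2 * ((e + 1) / 2) = e + 1 by omega] at this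
        convert this using 1
        funext x
        by_cases hx : x = s
        · subst hx; simp [hsI]; omega
        · simp [hx]

variable [Fintype V]

/-- The inductive form of the stacking theorem: `P` counts free pebbles, `T` is the set of unpaid
vertices, and `b x` is the number of pebbles that have been spent on `x`. -/
theorem coverable_aux (hG : G.Connected) (N : ℕ) (hN : ∀ g, ∑ x, 2 ^ G.dist g x ≤ N) (k : ℕ) :
    ∀ (P b : V → ℕ) (T : Finset V), ∑ x, P x = k → (∀ x ∈ T, b x = 0) →
      (∀ g, 0 < P g → ∀ x, b x ≤ 2 ^ G.dist g x) → (∃ g, ∀ x, b x ≤ 2 ^ G.dist g x) →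
      N ≤ ∑ x, P x + ∑ x, b x →
      Coverable G (P + fun x => if x ∈ T then 0 else 1) := by
  induction k using Nat.strong_induction_on with
  | _ k ih =>
  intro P b T hk hT hP hview hsum
  rcases T.eq_empty_or_nonempty with rfl | hTne
  · exact ⟨_, Relation.ReflTransGen.refl, fun v => by simp⟩
  have hpos : ∃ s, 0 < P s := by
    by_contra! h
    obtain ⟨g, hg⟩ := hview
    obtain ⟨t, ht⟩ := hTne
    have h0 : ∑ x, P x = 0 := sum_eq_zero fun x _ => by have := h x; omega
    have h1 : ∑ x, b x < ∑ x, 2 ^ G.dist g x :=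
      sum_lt_sum (fun x _ => hg x) ⟨t, mem_univ t, by rw [hT t ht]; positivity⟩
    have := hN g
    omega
  obtain ⟨s₀, hs₀⟩ := hpos
  obtain ⟨t₀, ht₀⟩ := hTne
  obtain ⟨⟨s, t⟩, hst, hmin⟩ := exists_min_image ((univ.filter fun s => 0 < P s) ×ˢ T)
    (fun q => G.dist q.1 q.2) ⟨(s₀, t₀), by simp [hs₀, ht₀]⟩
  simp only [mem_product, mem_filter, mem_univ, true_and] at hst
  obtain ⟨hs, ht⟩ := hst
  have hmin' : ∀ g, 0 < P g → ∀ x ∈ T, G.dist s t ≤ G.dist g x := fun g hg x hx =>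
    hmin (g, x) (by simp [hg, hx])
  clear hmin
  obtain ⟨e, he⟩ : ∃ e, e = min (P s) (2 ^ G.dist s t) := ⟨_, rfl⟩
  have hpow : 0 < 2 ^ G.dist s t := by positivity
  obtain ⟨I, hI, hIsum, hreach⟩ := exists_gather hG t _ s e rfl (by omega) (by omega)
  have hIT : ∀ x ∈ I, x ∉ T := fun x hx hxT => by
    have := hmin' s hs x hxT; have := (hI x hx).1; omega
  have htI : t ∉ I := fun h => hIT t h ht
  have hbI : e + ∑ x ∈ I, b x ≤ 2 ^ G.dist s t :=
    le_trans (Nat.add_le_add_left (sum_le_sum fun x _ => hP s hs x) e) hIsum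
  set P' : V → ℕ := fun x => if x = s then P s - e else P x with hP'
  set b' : V → ℕ := fun x => if x = t then e + ∑ y ∈ I, b y else if x ∈ I then 0 else b x with hb'
  have hPP' : P = P' + Pi.single s e := by
    funext x
    by_cases hx : x = s
    · subst hx; simp [hP']; omega
    · simp [hP', hx]
  have hPsum : ∑ x, P x = ∑ x, P' x + e := by
    conv_lhs => rw [hPP']
    simp [sum_add_distrib]
  have hbsum : ∑ x, b' x = ∑ x, b x + e := by
    have e1 : ∀ x, b' x + (if x ∈ I then b x else 0)
        = b x + (if x = t then e + ∑ y ∈ I, b y else 0) := by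
      intro x
      by_cases hx : x = t
      · subst hx; simp [hb', htI, hT x ht]
      · by_cases hxI : x ∈ I <;> simp [hb', hx, hxI]
    have e2 := sum_congr (rfl : (univ : Finset V) = univ) fun x _ => e1 x
    rw [sum_add_distrib, sum_add_distrib] at e2
    simp only [sum_ite_mem, univ_inter, sum_ite_eq', mem_univ, if_true] at e2
    omega
  have hb'P : ∀ g, 0 < P g → ∀ x, b' x ≤ 2 ^ G.dist g x := by
    intro g hg x
    by_cases hx : x = t
    · subst hx
      simp only [hb', if_true]
      exact hbI.trans (Nat.pow_le_pow_right (by norm_num) (hmin' g hg x ht))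
    · by_cases hxI : x ∈ I
      · simp [hb', hx, hxI]
      · simpa [hb', hx, hxI] using hP g hg x
  have key : Coverable G (P' + fun x => if x ∈ T.erase t ∪ I then 0 else 1) := by
    refine ih (∑ x, P' x) (by omega) P' b' _ rfl ?_ ?_ ⟨s, hb'P s hs⟩ (by omega)
    · intro x hx
      rcases mem_union.1 hx with hx | hx
      · have h1 := (mem_erase.1 hx).1
        by_cases hxI : x ∈ I <;> simp [hb', h1, hxI, hT x (mem_erase.1 hx).2]
      · have h1 : x ≠ t := fun h => htI (h ▸ hx)
        simp [hb', h1, hx]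
    · intro g hg
      refine hb'P g ?_
      have := congrFun hPP' g
      simp only [Pi.add_apply] at this
      omega
  obtain ⟨D', hD', hcov⟩ := key
  refine ⟨D', Relation.ReflTransGen.trans ?_ hD', hcov⟩
  convert hreach (P' + fun x => if x ∈ T ∪ I then 0 else 1) using 1
  · rw [hPP']
    funext x
    by_cases h1 : x ∈ T
    · have h2 : x ∉ I := fun h => hIT x h h1
      simp [h1, h2]
    · by_cases h2 : x ∈ I <;> simp [h1, h2]
      omega
  · funext x
    by_cases hx : x = t
    · subst hx; simp [ht, htI]
    · simp [hx]

/-- The stacking theorem (Sjöstrand): a number of pebbles which suffices for every stack suffices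
for every distribution. -/
theorem coverable_of_stacks_le (hG : G.Connected) (N : ℕ) (hN : ∀ g, ∑ x, 2 ^ G.dist g x ≤ N)
    (D : V → ℕ) (hD : ∑ x, D x = N) : Coverable G D := by
  obtain ⟨g⟩ := hG.nonempty
  have := coverable_aux hG N hN _ D 0 univ rfl (by simp) (by simp) ⟨g, by simp⟩ (by simp [hD])
  have e : (D + fun x => if x ∈ (univ : Finset V) then 0 else 1) = D := by funext x; simp
  rwa [e] at this

/-- Pebbles weighted by `2 ^ dist g x`: a step removes twice the weight of `u` and adds that of a
neighbour, which is at most twice as large. -/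
theorem weight_step_le (hG : G.Connected) (g : V) {D D' : V → ℕ} (h : PebblingStep G D D') :
    ∑ x, D' x * 2 ^ G.dist g x ≤ ∑ x, D x * 2 ^ G.dist g x := by
  obtain ⟨u, v, hadj, h2, rfl⟩ := h
  have hne := hadj.ne
  have hd : G.dist g v ≤ G.dist g u + 1 := by
    have h1 := dist_eq_one_iff_adj.2 hadj
    have h3 : G.dist g v ≤ G.dist g u + G.dist u v := hG.dist_triangle
    omega
  have hp : 2 ^ G.dist g v ≤ 2 * 2 ^ G.dist g u := by
    rw [← pow_succ']; exact Nat.pow_le_pow_right (by norm_num) hd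
  have e1 : ∀ x, (if x = u then D u - 2 else if x = v then D v + 1 else D x) * 2 ^ G.dist g x
      + (if x = u then 2 * 2 ^ G.dist g u else 0)
      = D x * 2 ^ G.dist g x + (if x = v then 2 ^ G.dist g v else 0) := by
    intro x
    by_cases h1 : x = u
    · subst h1
      simp only [if_true, hne, if_false]
      rw [← add_mul, Nat.sub_add_cancel h2, add_zero]
    · by_cases h3 : x = v
      · subst h3; simp [h1]; ring
      · simp [h1, h3]
  have e2 := sum_congr (rfl : (univ : Finset V) = univ) fun x _ => e1 x
  rw [sum_add_distrib, sum_add_distrib] at e2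
  simp only [sum_ite_eq', mem_univ, if_true] at e2
  beta_reduce
  omega

/-- Compare the weights before and after covering the graph from a single stack at `g`. -/
theorem stack_le_coverPebblingNumber (hG : G.Connected) (g : V) :
    ∑ x, 2 ^ G.dist g x ≤ coverPebblingNumber G := by
  -- The infimum is over a nonempty set by the stacking theorem, hence it is attained.
  have hmem : coverPebblingNumber G ∈ {N | ∀ D : V → ℕ, ∑ v, D v = N → Coverable G D} :=
    Nat.sInf_mem ⟨∑ g, ∑ x, 2 ^ G.dist g x, coverable_of_stacks_le hG _ fun g =>
      single_le_sum (f := fun g => ∑ x, 2 ^ G.dist g x) (fun _ _ => Nat.zero_le _) (mem_univ g)⟩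
  obtain ⟨D', hreach, hcov⟩ := hmem (Pi.single g (coverPebblingNumber G)) (by simp)
  have hle : ∑ x, D' x * 2 ^ G.dist g x
      ≤ ∑ x, (Pi.single g (coverPebblingNumber G) : V → ℕ) x * 2 ^ G.dist g x := by
    clear hcov
    induction hreach with
    | refl => exact le_rfl
    | tail _ h ih => exact (weight_step_le hG g h).trans ih
  have e : ∑ x, (Pi.single g (coverPebblingNumber G) : V → ℕ) x * 2 ^ G.dist g x
      = coverPebblingNumber G := by
    simp [Pi.single_apply]
  rw [e] at hle
  refine le_trans (sum_le_sum fun x _ => ?_) hle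
  exact Nat.le_mul_of_pos_left _ (hcov x)

end Stacking

section Cycle

-- Makes the coercion from `ℕ` to `Fin (m + 2)`, reduction modulo `m + 2`, a ring homomorphism.
open scoped Fin.CommRing

theorem dist_cycleGraph_le (m : ℕ) (i : Fin (m + 2)) (k : ℕ) :
    (cycleGraph (m + 2)).dist i (i + (k : Fin (m + 2))) ≤ k := by
  induction k with
  | zero => simp
  | succ k ih =>
    have hadj : (cycleGraph (m + 2)).Adj (i + (k : Fin (m + 2)))
        (i + ((k + 1 : ℕ) : Fin (m + 2))) := by
      rw [cycleGraph_adj]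
      right
      push_cast
      ring
    have h1 := dist_eq_one_iff_adj.2 hadj
    have hc : (cycleGraph (m + 2)).Connected := cycleGraph_connected
    have := hc.dist_triangle (u := i) (v := i + (k : Fin (m + 2)))
      (w := i + ((k + 1 : ℕ) : Fin (m + 2)))
    omega

theorem sum_two_pow_sub (q : ℕ) : ∑ x ∈ range q, 2 ^ (q - x) + 2 = 2 ^ (q + 1) := by
  induction q with
  | zero => simp
  | succ q ih =>
    rw [sum_range_succ']
    simp only [Nat.add_sub_add_right, Nat.sub_zero]
    rw [pow_succ 2 (q + 1)]
    omega

/-- The bound holds for every splitting `n = r + q`: going around from `i`, the first `r` vertices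
are reached in one direction and the other `q` in the opposite direction. -/
theorem stack_cycleGraph_le {n : ℕ} (hn : 2 ≤ n) (r q : ℕ) (hrq : n = r + q) (i : Fin n) :
    ∑ j, 2 ^ (cycleGraph n).dist i j ≤ 2 ^ r + 2 ^ (q + 1) - 3 := by
  obtain ⟨m, rfl⟩ := Nat.exists_eq_add_of_le' hn
  have hback : ∀ k : ℕ, k ≤ m + 2 →
      (cycleGraph (m + 2)).dist i (i + (k : Fin (m + 2))) ≤ m + 2 - k := by
    intro k hk
    have h := dist_cycleGraph_le m (i + (k : Fin (m + 2))) (m + 2 - k)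
    have e : i + (k : Fin (m + 2)) + ((m + 2 - k : ℕ) : Fin (m + 2)) = i := by
      rw [add_assoc, ← Nat.cast_add, Nat.add_sub_cancel' hk, Fin.natCast_self, add_zero]
    rwa [e, SimpleGraph.dist_comm] at h
  have hre : ∑ j, 2 ^ (cycleGraph (m + 2)).dist i j
      = ∑ k ∈ range (m + 2), 2 ^ (cycleGraph (m + 2)).dist i (i + (k : Fin (m + 2))) := by
    rw [← Fin.sum_univ_eq_sum_range
      (fun k => 2 ^ (cycleGraph (m + 2)).dist i (i + (k : Fin (m + 2)))),
      ← Equiv.sum_comp (Equiv.addLeft i)]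
    simp
  rw [hre, show range (m + 2) = range (r + q) by rw [hrq], sum_range_add]
  have h1 : ∑ k ∈ range r, 2 ^ (cycleGraph (m + 2)).dist i (i + (k : Fin (m + 2)))
      ≤ ∑ k ∈ range r, 2 ^ k :=
    sum_le_sum fun k _ => Nat.pow_le_pow_right (by norm_num) (dist_cycleGraph_le m i k)
  have h2 : ∑ k ∈ range q, 2 ^ (cycleGraph (m + 2)).dist i (i + ((r + k : ℕ) : Fin (m + 2)))
      ≤ ∑ k ∈ range q, 2 ^ (q - k) := by
    refine sum_le_sum fun k hk => Nat.pow_le_pow_right (by norm_num) ?_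
    have := mem_range.1 hk
    have := hback (r + k) (by omega)
    omega
  have h3 := sum_two_pow_sub q
  have h4 : ∑ k ∈ range r, 2 ^ k + 1 = 2 ^ r := by
    have := Nat.geomSum_eq (le_refl 2) r
    have := Nat.one_le_two_pow (n := r)
    simp at *
    omega
  omega

end Cycle

theorem cover_pebbling_cycle_prod {V : Type*} [DecidableEq V] [Fintype V] [Nonempty V]
    (G : SimpleGraph V) (hG : G.Connected) (n : ℕ) (hn : 3 ≤ n) :
    coverPebblingNumber (G □ cycleGraph n) ≤
      coverPebblingNumber G * (2 ^ ((n + 1) / 2) + 2 ^ (n - (n + 1) / 2 + 1) - 3) := by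
  have hC : (cycleGraph n).Connected := by
    obtain ⟨m, rfl⟩ := Nat.exists_eq_add_of_le' (show 1 ≤ n by omega)
    exact cycleGraph_connected
  have hGC : (G □ cycleGraph n).Connected := hG.boxProd hC
  have hdist : ∀ x y : V × Fin n, (G □ cycleGraph n).dist x y
      = G.dist x.1 y.1 + (cycleGraph n).dist x.2 y.2 := by
    intro x y
    have h := edist_boxProd (G := G) (H := cycleGraph n) x y
    rw [← (hGC x y).coe_dist_eq_edist, ← (hG x.1 y.1).coe_dist_eq_edist,
      ← (hC x.2 y.2).coe_dist_eq_edist] at h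
    exact_mod_cast h
  refine Nat.sInf_le (coverable_of_stacks_le hGC _ fun g => ?_)
  calc ∑ x, 2 ^ (G □ cycleGraph n).dist g x
      = (∑ a, 2 ^ G.dist g.1 a) * ∑ j, 2 ^ (cycleGraph n).dist g.2 j := by
        rw [Fintype.sum_prod_type, sum_mul_sum]
        simp only [hdist, pow_add]
    _ ≤ _ := Nat.mul_le_mul (stack_le_coverPebblingNumber hG g.1)
        (stack_cycleGraph_le (by omega) _ _ (by omega) g.2)
end

section
/- If G is a good graph, then γ(P_n □ G) = γ(P_n)·γ(G) and γ(C_n □ G) = γ(C_n)·γ(G). -/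
/-!
The proof rests on Sjöstrand's cover pebbling theorem: for every connected graph `G`,
`γ(G) = max_u ∑ w, 2 ^ dist u w` (`coverPebblingNumber_spec`), so every connected graph is good.
Distances in `G □ H` are sums of distances in the factors, so the sum for a vertex `(a, b)` of the
product is the product of the sums for `a` and `b`, and the maxima multiply
(`coverPebblingNumber_boxProd`).

The lower bound in the cover pebbling theorem comes from weighting pebbles at `w` by
`2 ^ dist u w` (`le_of_coverable_single`). For the upper bound (`coverable_of_cost`), every vertex
`v` is charged the number `c v` of original pebbles spent on it, in such a way that the total charge
remains the number of original pebbles, and a vertex with at most one pebble is charged at most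
`2 ^ dist u v` for every vertex `u` that has at least two pebbles. Take a vertex `f` with at
least two pebbles and an empty vertex `t` at minimal distance `d`; the inner vertices of a shortest
path between them all carry exactly one pebble.
* If `f` has at least three pebbles, two of them push one pebble along the path to `t`
  (`exists_push`). The inner vertices become empty, and `t` inherits their charges: at most
  `2 + 2 ^ 1 + ⋯ + 2 ^ (d - 1) = 2 ^ d`, which by minimality of `d` is an admissible charge.
* If `f` has exactly two pebbles, one of them is discarded. The charge `2` of `f` is admissible,
  since every other vertex is at distance at least `1`.

Each of these lowers the number of pebbles, so the process ends. If it ended with an empty vertex,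
the charges would be bounded by `2 ^ dist u v`, where `u` is the last vertex that had at least
two pebbles, and `0` at the empty vertex; their sum would be less than `∑ v, 2 ^ dist u v`. Only
`u` itself may exceed its bound, by `1` if its second pebble was discarded, and the empty vertex,
at distance at least `1` from `u`, saves at least `2`.
-/

open SimpleGraph Finset

/-! ### Pebbling along paths -/

theorem Coverable.mono {V : Type*} [DecidableEq V] {G : SimpleGraph V} {D E : V → ℕ}
    (h : Coverable G D) (hDE : ∀ v, D v ≤ E v) : Coverable G E := by
  obtain ⟨D', hr, hc⟩ := h
  induction hr using Relation.ReflTransGen.head_induction_on generalizing E with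
  | refl => exact ⟨E, .refl, fun v => (hc v).trans (hDE v)⟩
  | @head A B hAB _ ih =>
    obtain ⟨u, v, huv, hu, rfl⟩ := hAB
    obtain ⟨E', hr', hc'⟩ := ih
      (E := fun w => if w = u then E u - 2 else if w = v then E v + 1 else E w) (by
        intro w
        have h1 := hDE u
        have h2 := hDE v
        have h3 := hDE w
        dsimp only
        split_ifs <;> omega)
    exact ⟨E', .head ⟨u, v, huv, hu.trans (hDE u), rfl⟩ hr', hc'⟩

/-- Two pebbles at the start of a path whose inner vertices are all occupied suffice to put a new
pebble on the last vertex: every inner vertex receives one pebble and spends it together with one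
of its own. -/
theorem exists_push {V : Type*} [DecidableEq V] {G : SimpleGraph V} {f t : V}
    (p : G.Walk f t) (hp : p.IsPath) (D : V → ℕ)
    (hD : ∀ w ∈ p.support, w ≠ t → 1 ≤ D w) (hf : f ≠ t → 2 ≤ D f) :
    ∃ D', Relation.ReflTransGen (PebblingStep G) D D' ∧
      ∀ w, D' w + (if w ∈ p.support then 1 else 0) + (if w = f then 1 else 0) =
        D w + 2 * (if w = t then 1 else 0) := by
  induction p generalizing D with
  | nil =>
    refine ⟨D, .refl, fun w => ?_⟩
    simp only [Walk.support_nil, List.mem_singleton]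
    split_ifs <;> omega
  | @cons f v t h p ih =>
    rw [Walk.cons_isPath_iff] at hp
    have hft : f ≠ t := by
      rintro rfl
      exact hp.2 p.end_mem_support
    have hvf : v ≠ f := h.ne'
    have h2 := hf hft
    obtain ⟨D', hr, hD'⟩ := ih hp.1
      (fun w => if w = f then D f - 2 else if w = v then D v + 1 else D w) (by
        intro w hw hwt
        have hwf : w ≠ f := by rintro rfl; exact hp.2 hw
        have := hD w (by simp [hw]) hwt
        simp only [hwf, if_false]
        split_ifs <;> omega) (by
        intro hvt
        have := hD v (by simp) hvt
        simp only [hvf, if_false, if_true]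
        omega)
    refine ⟨D', .head ⟨f, v, h, h2, rfl⟩ hr, fun w => ?_⟩
    have := hD' w
    simp only [Walk.support_cons, List.mem_cons]
    by_cases hwf : w = f
    · subst hwf
      simp only [hp.2, hvf.symm, hft, if_false, if_true, true_or] at this ⊢
      omega
    · simp only [hwf, if_false, false_or] at this ⊢
      by_cases hwv : w = v
      · subst hwv
        simp only [if_true] at this ⊢
        omega
      · simp only [hwv, if_false] at this ⊢
        omega

/-! ### The upper bound in the cover pebbling theorem -/

theorem two_add_sum_two_pow (d : ℕ) (hd : 0 < d) : 2 + ∑ i ∈ Finset.Ico 1 d, 2 ^ i = 2 ^ d := by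
  induction d, hd using Nat.le_induction with
  | base => simp
  | succ n hn ih =>
    rw [Finset.sum_Ico_succ_top hn, ← add_assoc, ih, pow_succ]
    ring

/-- The invariant behind the upper bound in the cover pebbling theorem. `D` is what remains of a
larger distribution, and the cost `c v` counts the original pebbles that have been spent on `v`,
including those lying on `v` and those discarded there. A fat vertex (at least two pebbles) has its
own pebbles as cost, an empty vertex has cost `0`, and a vertex with one pebble costs at most
`2 ^ dist u v` for every fat `u`. When there is no fat vertex, the costs still satisfy
such a bound for a single vertex `u`. -/
theorem coverable_of_cost {V : Type*} [DecidableEq V] [Fintype V] {G : SimpleGraph V}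
    (hG : G.Connected) (k : ℕ) : ∀ (D c : V → ℕ), ∑ v, D v = k →
    (∀ v, D v = 0 → c v = 0) → (∀ v, 2 ≤ D v → c v = D v) →
    (∀ u v, 2 ≤ D u → D v = 1 → c v ≤ 2 ^ G.dist u v) →
    ((∃ u, 2 ≤ D u) ∨ ∃ u, ∀ v, c v ≤ 2 ^ G.dist u v) →
    (∀ u, ∑ w, 2 ^ G.dist u w ≤ ∑ v, c v) → Coverable G D := by
  induction k using Nat.strong_induction_on with
  | _ k ih =>
  intro D c hk h0 h2 h1 hex hsum
  by_cases hthin : ∀ v, 1 ≤ D v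
  · exact ⟨D, .refl, hthin⟩
  push Not at hthin
  obtain ⟨t₀, ht₀⟩ := hthin
  have ht₀ : D t₀ = 0 := by omega
  by_cases hfat : ∃ u, 2 ≤ D u
  swap
  · obtain ⟨u, hu⟩ := hex.resolve_left hfat
    refine absurd (hsum u) (not_le.2 (Finset.sum_lt_sum (fun v _ => hu v) ⟨t₀, mem_univ _, ?_⟩))
    rw [h0 t₀ ht₀]
    positivity
  obtain ⟨f₀, hf₀⟩ := hfat
  -- a fat vertex `f` and an empty vertex `t` as close together as possible
  obtain ⟨⟨f, t⟩, hmem, hmin⟩ := Finset.exists_min_image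
    (univ.filter fun q : V × V => 2 ≤ D q.1 ∧ D q.2 = 0) (fun q => G.dist q.1 q.2)
    ⟨(f₀, t₀), by simp [hf₀, ht₀]⟩
  have hmin : ∀ u v, 2 ≤ D u → D v = 0 → G.dist f t ≤ G.dist u v := fun u v hu hv =>
    hmin (u, v) (by simp [hu, hv])
  obtain ⟨hf, ht⟩ : 2 ≤ D f ∧ D t = 0 := by simpa using hmem
  have hft : f ≠ t := by rintro rfl; omega
  by_cases hf3 : D f = 2
  · -- The second pebble of `f` is given up: `f` then has cost `2`, at most `2 ^ dist u f`
    -- for every other fat vertex `u`.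
    refine Coverable.mono (D := Function.update D f 1) ?_ (fun v => by
      by_cases hv : v = f
      · subst hv; simp [hf3]
      · simp [hv])
    by_cases hother : ∃ u, u ≠ f ∧ 2 ≤ D u
    · refine ih _ ?_ _ c rfl ?_ ?_ ?_ ?_ hsum
      · rw [← hk]
        refine Finset.sum_lt_sum (fun v _ => ?_) ⟨f, mem_univ _, by simp [hf3]⟩
        by_cases hv : v = f
        · subst hv; simp [hf3]
        · simp [hv]
      · intro v hv
        by_cases hvf : v = f
        · subst hvf; simp at hv
        · exact h0 v (by simpa [hvf] using hv)
      · intro v hv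
        by_cases hvf : v = f
        · subst hvf; simp at hv
        · simpa [hvf] using h2 v (by simpa [hvf] using hv)
      · intro u v hu hv
        have huf : u ≠ f := by rintro rfl; simp at hu
        have hu : 2 ≤ D u := by simpa [huf] using hu
        by_cases hvf : v = f
        · subst hvf
          rw [h2 v hf, hf3]
          exact Nat.le_self_pow (hG.pos_dist_of_ne huf).ne' 2
        · exact h1 u v hu (by simpa [hvf] using hv)
      · obtain ⟨u, huf, hu⟩ := hother
        exact .inl ⟨u, by simpa [huf] using hu⟩
    · -- If `f` is the only fat vertex, the total cost is too small: the surplus of `1` at `f` is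
      -- outweighed by the empty vertex `t`, for which nothing has been paid.
      exfalso
      push Not at hother
      refine absurd (hsum f) (not_le.2 ?_)
      have hb : ∀ v ∈ (univ.erase f).erase t, c v ≤ 2 ^ G.dist f v := by
        intro v hv
        have hvf : v ≠ f := by simp at hv; tauto
        have := hother v hvf
        rcases Nat.eq_zero_or_pos (D v) with h | h
        · rw [h0 v h]; positivity
        · exact h1 f v hf (by omega)
      have htm : t ∈ univ.erase f := by simp [hft.symm]
      have hs := Finset.sum_le_sum hb
      rw [← Finset.add_sum_erase univ c (mem_univ f), ← Finset.add_sum_erase _ c htm,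
        ← Finset.add_sum_erase univ (fun w => 2 ^ G.dist f w) (mem_univ f),
        ← Finset.add_sum_erase _ (fun w => 2 ^ G.dist f w) htm, h0 t ht, h2 f hf, hf3]
      have : 2 ≤ 2 ^ G.dist f t := Nat.le_self_pow (hG.pos_dist_of_ne hft).ne' 2
      simp only [SimpleGraph.dist_self, pow_zero]
      omega
  · -- Two pebbles of `f` are pushed along a shortest path to `t`, whose inner vertices `I` carry
    -- exactly one pebble each and become empty; `t` takes over their costs.
    obtain ⟨p, hp, hlen⟩ := hG.exists_path_of_dist f t
    set d := G.dist f t with hd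
    have hdpos : 0 < d := hG.pos_dist_of_ne hft
    have hdist : ∀ i, i ≤ d → G.dist f (p.getVert i) ≤ i ∧ G.dist (p.getVert i) t ≤ d - i := by
      intro i hi
      constructor
      · refine (dist_le (p.take i)).trans ?_
        simp [Walk.take_length]
      · refine (dist_le (p.drop i)).trans ?_
        simp [Walk.drop_length, hlen]
    have hone : ∀ i ∈ Finset.Ico 1 d, D (p.getVert i) = 1 := by
      intro i hi
      rw [Finset.mem_Ico] at hi
      obtain ⟨ha, hb⟩ := hdist i hi.2.le
      have h3 : D (p.getVert i) ≠ 0 := fun h => by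
        have := hmin f _ hf h
        omega
      have h4 : ¬ 2 ≤ D (p.getVert i) := fun h => by
        have := hmin _ t h ht
        omega
      omega
    set I : Finset V := (Finset.Ico 1 d).image p.getVert with hI
    have hI1 : ∀ w ∈ I, D w = 1 := by
      intro w hw
      obtain ⟨i, hi, rfl⟩ := Finset.mem_image.1 hw
      exact hone i hi
    have hfI : f ∉ I := fun h => by have := hI1 f h; omega
    have htI : t ∉ I := fun h => by have := hI1 t h; omega
    have hsupp : ∀ w, w ∈ p.support ↔ w = f ∨ w = t ∨ w ∈ I := by
      intro w
      rw [Walk.mem_support_iff_exists_getVert]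
      constructor
      · rintro ⟨i, rfl, hi⟩
        rcases Nat.eq_zero_or_pos i with rfl | hi0
        · simp
        · rcases hi.eq_or_lt with h | h
          · subst h; simp
          · exact .inr (.inr (Finset.mem_image_of_mem _ (Finset.mem_Ico.2 ⟨hi0, hlen ▸ h⟩)))
      · rintro (rfl | rfl | h)
        · exact ⟨0, by simp, by omega⟩
        · exact ⟨p.length, by simp, le_rfl⟩
        · obtain ⟨i, hi, rfl⟩ := Finset.mem_image.1 h
          rw [Finset.mem_Ico] at hi
          exact ⟨i, rfl, by omega⟩
    have hcost : 2 + ∑ w ∈ I, c w ≤ 2 ^ d := by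
      have hle : ∑ w ∈ I, c w ≤ ∑ i ∈ Finset.Ico 1 d, 2 ^ i := by
        calc ∑ w ∈ I, c w ≤ ∑ i ∈ Finset.Ico 1 d, c (p.getVert i) :=
              Finset.sum_image_le_of_nonneg (fun _ _ => Nat.zero_le _)
          _ ≤ _ := Finset.sum_le_sum fun i hi =>
              (h1 f _ hf (hone i hi)).trans
                (Nat.pow_le_pow_right two_pos (hdist i (Finset.mem_Ico.1 hi).2.le).1)
      have hgeo := two_add_sum_two_pow d hdpos
      omega
    obtain ⟨D', hr, hD'⟩ := exists_push p hp D (by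
      intro w hw hwt
      rcases (hsupp w).1 hw with rfl | rfl | h
      · omega
      · exact absurd rfl hwt
      · exact (hI1 w h).ge) (fun _ => hf)
    have hD'f : D' f + 2 = D f := by
      have := hD' f
      simp [hft] at this; omega
    have hD't : D' t = 1 := by
      have := hD' t
      simp [hft.symm, ht] at this; omega
    have hD'I : ∀ w ∈ I, D' w = 0 := by
      intro w hw
      have := hD' w
      have hwf : w ≠ f := fun h => hfI (h ▸ hw)
      have hwt : w ≠ t := fun h => htI (h ▸ hw)
      simp [hwf, hwt, (hsupp w).2 (.inr (.inr hw)), hI1 w hw] at this; omega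
    have hD'o : ∀ w, w ≠ f → w ≠ t → w ∉ I → D' w = D w := by
      intro w hwf hwt hw
      have := hD' w
      simpa [hwf, hwt, hw, hsupp] using this
    suffices Coverable G D' by
      obtain ⟨E, hE, hE'⟩ := this
      exact ⟨E, hr.trans hE, hE'⟩
    set c' : V → ℕ := fun w => if w = f then c f - 2 else if w = t then 2 + ∑ w ∈ I, c w
      else if w ∈ I then 0 else c w with hc'
    have hc'f : c' f + 2 = c f := by have := h2 f hf; simp [hc']; omega
    have hc't : c' t = 2 + ∑ w ∈ I, c w := by simp [hc', hft.symm]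
    have hc'I : ∀ w ∈ I, c' w = 0 := by
      intro w hw
      have hwf : w ≠ f := fun h => hfI (h ▸ hw)
      have hwt : w ≠ t := fun h => htI (h ▸ hw)
      simp [hc', hwf, hwt, hw]
    have hc'o : ∀ w, w ≠ f → w ≠ t → w ∉ I → c' w = c w := by
      intro w hwf hwt hw
      simp [hc', hwf, hwt, hw]
    -- splitting a sum over all vertices into `f`, `t`, `I` and the rest
    have hsplit : ∀ g : V → ℕ, ∑ v, g v =
        g f + (g t + (∑ v ∈ I, g v + ∑ v ∈ ((univ.erase f).erase t) \ I, g v)) := by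
      intro g
      rw [← Finset.add_sum_erase univ g (mem_univ f),
        ← Finset.add_sum_erase (univ.erase f) g (a := t) (by simp [hft.symm]),
        ← Finset.sum_sdiff (s₁ := I) (s₂ := (univ.erase f).erase t), add_comm (∑ v ∈ I, g v)]
      intro w hw
      have hwf : w ≠ f := fun h => hfI (h ▸ hw)
      have hwt : w ≠ t := fun h => htI (h ▸ hw)
      simp [hwf, hwt]
    have hrest : ∀ w ∈ ((univ.erase f).erase t) \ I, w ≠ f ∧ w ≠ t ∧ w ∉ I := by
      intro w hw
      simp at hw
      tauto
    have hbound : ∀ u v, 2 ≤ D u → D' v ≤ 1 → v ≠ f → c' v ≤ 2 ^ G.dist u v := by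
      intro u v hu hv hvf
      by_cases hvt : v = t
      · subst hvt
        rw [hc't]
        exact hcost.trans (Nat.pow_le_pow_right two_pos (hmin u v hu ht))
      by_cases hvI : v ∈ I
      · rw [hc'I v hvI]; exact Nat.zero_le _
      rw [hc'o v hvf hvt hvI]
      rw [hD'o v hvf hvt hvI] at hv
      rcases Nat.eq_zero_or_pos (D v) with h | h
      · rw [h0 v h]; exact Nat.zero_le _
      · exact h1 u v hu (by omega)
    have hfatD : ∀ u, 2 ≤ D' u → 2 ≤ D u := by
      intro u hu
      by_cases huf : u = f
      · subst huf; exact hf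
      have hut : u ≠ t := by rintro rfl; omega
      have huI : u ∉ I := fun h => by have := hD'I u h; omega
      rwa [← hD'o u huf hut huI]
    refine ih (∑ v, D' v) ?_ D' c' rfl ?_ ?_ ?_ ?_ ?_
    · have hr1 : ∑ w ∈ ((univ.erase f).erase t) \ I, D' w =
          ∑ w ∈ ((univ.erase f).erase t) \ I, D w := Finset.sum_congr rfl fun w hw =>
        hD'o w (hrest w hw).1 (hrest w hw).2.1 (hrest w hw).2.2
      rw [← hk, hsplit D, hsplit D', Finset.sum_eq_zero hD'I, hr1]
      omega
    · intro v hv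
      have hvf : v ≠ f := by rintro rfl; omega
      have hvt : v ≠ t := by rintro rfl; omega
      by_cases hvI : v ∈ I
      · exact hc'I v hvI
      · rw [hc'o v hvf hvt hvI]
        exact h0 v (by rwa [← hD'o v hvf hvt hvI])
    · intro v hv
      by_cases hvf : v = f
      · subst hvf
        have := h2 v hf
        omega
      have hvt : v ≠ t := by rintro rfl; omega
      have hvI : v ∉ I := fun h => by have := hD'I v h; omega
      rw [hc'o v hvf hvt hvI, hD'o v hvf hvt hvI]
      exact h2 v (hfatD v hv)
    · intro u v hu hv
      by_cases hvf : v = f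
      · subst hvf
        have := h2 v hf
        have : c' v = 1 := by omega
        rw [this]
        exact Nat.one_le_two_pow
      · exact hbound u v (hfatD u hu) hv.le hvf
    · by_cases h : ∃ u, 2 ≤ D' u
      · exact .inl h
      · push Not at h
        refine .inr ⟨f, fun v => ?_⟩
        by_cases hvf : v = f
        · subst hvf
          have := h2 v hf
          have := h v
          simp only [SimpleGraph.dist_self, pow_zero]
          omega
        · exact hbound f v hf (by have := h v; omega) hvf
    · have : ∑ v, c' v = ∑ v, c v := by
        have hr1 : ∑ w ∈ ((univ.erase f).erase t) \ I, c' w =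
            ∑ w ∈ ((univ.erase f).erase t) \ I, c w := Finset.sum_congr rfl fun w hw =>
          hc'o w (hrest w hw).1 (hrest w hw).2.1 (hrest w hw).2.2
        rw [hsplit c, hsplit c', Finset.sum_eq_zero hc'I, hr1, h0 t ht]
        omega
      rwa [this]

/-! ### The lower bound and the cover pebbling theorem -/

/-- Pebbles at `w` weighted by `2 ^ dist u w` never gain total weight, so a pile on `u` that can
be spread over all vertices has at least `∑ w, 2 ^ dist u w` pebbles. -/
theorem le_of_coverable_single {V : Type*} [DecidableEq V] [Fintype V] {G : SimpleGraph V}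
    (hG : G.Connected) (u : V) (N : ℕ) (h : Coverable G (Pi.single u N)) :
    ∑ w, 2 ^ G.dist u w ≤ N := by
  have key : ∀ D D' : V → ℕ, Relation.ReflTransGen (PebblingStep G) D D' →
      ∑ w, D' w * 2 ^ G.dist u w ≤ ∑ w, D w * 2 ^ G.dist u w := by
    intro D D' hr
    induction hr with
    | refl => exact le_rfl
    | @tail A B _ hAB ih =>
      refine le_trans ?_ ih
      obtain ⟨x, y, hxy, hx, rfl⟩ := hAB
      have hym : y ∈ univ.erase x := by simp [hxy.ne']
      rw [← Finset.add_sum_erase univ _ (mem_univ x), ← Finset.add_sum_erase _ _ hym,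
        ← Finset.add_sum_erase univ (fun w => A w * 2 ^ G.dist u w) (mem_univ x),
        ← Finset.add_sum_erase _ (fun w => A w * 2 ^ G.dist u w) hym]
      have hrest : ∀ w ∈ (univ.erase x).erase y,
          (if w = x then A x - 2 else if w = y then A y + 1 else A w) * 2 ^ G.dist u w =
            A w * 2 ^ G.dist u w := by
        intro w hw
        simp at hw
        simp [hw]
      rw [Finset.sum_congr rfl hrest]
      simp only [if_true, hxy.ne', if_false]
      have hd : 2 ^ G.dist u y ≤ 2 * 2 ^ G.dist u x := by
        rw [← pow_succ']
        refine Nat.pow_le_pow_right two_pos ?_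
        have := hG.dist_triangle (u := u) (v := x) (w := y)
        rwa [dist_eq_one_iff_adj.2 hxy] at this
      obtain ⟨a, ha⟩ := Nat.exists_eq_add_of_le hx
      rw [ha, Nat.add_sub_cancel_left]
      nlinarith
  obtain ⟨D', hr, hD'⟩ := h
  calc ∑ w, 2 ^ G.dist u w ≤ ∑ w, D' w * 2 ^ G.dist u w :=
        Finset.sum_le_sum fun w _ => Nat.le_mul_of_pos_left _ (hD' w)
    _ ≤ ∑ w, (Pi.single u N : V → ℕ) w * 2 ^ G.dist u w := key _ _ hr
    _ = N := by
      rw [Finset.sum_eq_single u (fun w _ hw => by simp [hw]) (by simp)]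
      simp

/-- The cover pebbling theorem: `γ(G)` is the maximum over `u` of `∑ w, 2 ^ dist u w`, the number
of pebbles needed when all of them start on `u`. -/
theorem coverPebblingNumber_spec {V : Type*} [DecidableEq V] [Fintype V] {G : SimpleGraph V}
    (hG : G.Connected) : (∀ u, ∑ w, 2 ^ G.dist u w ≤ coverPebblingNumber G) ∧
      ∃ u, coverPebblingNumber G = ∑ w, 2 ^ G.dist u w := by
  have := hG.nonempty
  obtain ⟨u, -, hu⟩ := Finset.exists_max_image (univ : Finset V)
    (fun u => ∑ w, 2 ^ G.dist u w) univ_nonempty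
  have hmem : ∑ w, 2 ^ G.dist u w ∈ {N | ∀ D : V → ℕ, ∑ v, D v = N → Coverable G D} := by
    intro D hD
    refine coverable_of_cost hG _ D D rfl (fun _ h => h) (fun _ _ => rfl)
      (fun u v _ h => h ▸ Nat.one_le_two_pow) ?_ (fun v => hD ▸ hu v (mem_univ v))
    by_cases h : ∃ u, 2 ≤ D u
    · exact .inl h
    · push Not at h
      exact .inr ⟨u, fun v => (Nat.le_of_lt_succ (h v)).trans Nat.one_le_two_pow⟩
  have hlow : ∀ v, ∑ w, 2 ^ G.dist v w ≤ coverPebblingNumber G := fun v =>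
    le_of_coverable_single hG v _ (Nat.sInf_mem ⟨_, hmem⟩ _ (by simp [coverPebblingNumber]))
  exact ⟨hlow, u, le_antisymm (Nat.sInf_le hmem) (hlow u)⟩

/-! ### Cartesian products -/

theorem coverPebblingNumber_boxProd {V W : Type*} [DecidableEq V] [Fintype V] [DecidableEq W]
    [Fintype W] {G : SimpleGraph V} {H : SimpleGraph W} (hG : G.Connected) (hH : H.Connected) :
    coverPebblingNumber (G □ H) = coverPebblingNumber G * coverPebblingNumber H := by
  have hprod : ∀ u : V × W, ∑ w, 2 ^ (G □ H).dist u w =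
      (∑ w, 2 ^ G.dist u.1 w) * ∑ w, 2 ^ H.dist u.2 w := by
    intro u
    rw [Finset.sum_mul_sum, Fintype.sum_prod_type]
    refine Finset.sum_congr rfl fun a _ => Finset.sum_congr rfl fun b _ => ?_
    have hd := edist_boxProd (G := G) (H := H) u (a, b)
    rw [← (hG.boxProd hH u (a, b)).coe_dist_eq_edist, ← (hG u.1 a).coe_dist_eq_edist,
      ← (hH u.2 b).coe_dist_eq_edist] at hd
    have hd : (G □ H).dist u (a, b) = G.dist u.1 a + H.dist u.2 b := by exact_mod_cast hd
    rw [hd, pow_add]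
  obtain ⟨hlG, a, ha⟩ := coverPebblingNumber_spec hG
  obtain ⟨hlH, b, hb⟩ := coverPebblingNumber_spec hH
  obtain ⟨hl, q, hq⟩ := coverPebblingNumber_spec (hG.boxProd hH)
  refine le_antisymm ?_ ?_
  · rw [hq, hprod]
    exact Nat.mul_le_mul (hlG _) (hlH _)
  · have := hl (a, b)
    rwa [hprod, ← ha, ← hb] at this

theorem good_prod_path_cycle_eq {V : Type*} [DecidableEq V] [Fintype V]
    (G : SimpleGraph V) (hGc : G.Connected) (hG : IsGood G)
    (n m : ℕ) (hn : 1 ≤ n) (hm : 3 ≤ m) :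
    coverPebblingNumber (pathGraph n □ G) =
        coverPebblingNumber (pathGraph n) * coverPebblingNumber G ∧
      coverPebblingNumber (cycleGraph m □ G) =
        coverPebblingNumber (cycleGraph m) * coverPebblingNumber G := by
  obtain ⟨n, rfl⟩ := Nat.exists_eq_add_of_le' hn
  obtain ⟨m, rfl⟩ := Nat.exists_eq_add_of_le' hm
  exact ⟨coverPebblingNumber_boxProd (pathGraph_connected n) hGc,
    coverPebblingNumber_boxProd cycleGraph_connected hGc⟩
end
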